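/- arXiv:2008.06923 — 12 statements merged into one kernel-verified Lean document; each statement's English description precedes it below -/
import Mathlib

section
/- In the n-pool DPBW game, suppose every pool's deduction parameter satisfies α_i ≤ 1 − m_max/m, where m_max = max_k m_k. Then the all-zero profile (no pool infiltrates any other pool) is a Nash equilibrium. Concretely: for every pool i and every feasible deviation (x_{ij})_{j≠i} with x_{ij} ≥ 0 and x_i := Σ_{j≠i} x_{ij} ≤ m_i, the deviating pool's reward satisfies (m_i − x_i)/(m − x_i) + Σ_{j≠i} α_j·x_{ij}·m_j/((m − x_i)·(m_j + x_{ij})) ≤ m_i/m. -/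
/-! With `S = ∑ x j` the total infiltration of pool `i`, the hypothesis on the deduction
parameters gives `α j ≤ 1 - mp i / m`, and the dilution factor `mp j / (mp j + x j)` is at most `1`.
So the reward from infiltration is at most `(1 - mp i / m) * S / (m - S)`, and adding the direct
mining reward `(mp i - S) / (m - S)` gives exactly `mp i / m`: at the threshold value of the
deduction parameters, the gain from infiltrating just offsets the mining power given up. -/

/-- **No-pool-attacks is a Nash equilibrium in the n-pool DPBW game.**
If every deduction parameter satisfies `α i ≤ 1 - m_max / m`, then for every pool `i`
and every feasible deviation `(x j)_{j ≠ i}` (with `x j ≥ 0` and total infiltration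
at most `mp i`), the deviating pool's reward is at most `mp i / m`, its reward (and
utility) at the all-zero profile. -/
theorem no_pool_attacks_is_nash
    (n : ℕ) (hn : 2 ≤ n)
    (m : ℝ) (mp α : Fin n → ℝ)
    (hmp : ∀ i, 0 < mp i)
    (hsum : ∑ i, mp i ≤ m)
    (hmmax : ∀ i, mp i < m)
    (hα : ∀ i, 0 < α i ∧ α i < 1)
    (hαle : ∀ i, α i ≤ 1 -
      (Finset.univ.sup' ⟨(⟨0, by omega⟩ : Fin n), Finset.mem_univ _⟩ mp) / m) :
    ∀ i : Fin n, ∀ x : Fin n → ℝ,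
      (∀ j, j ≠ i → 0 ≤ x j) →
      (∑ j ∈ Finset.univ.erase i, x j) ≤ mp i →
      (mp i - ∑ j ∈ Finset.univ.erase i, x j) / (m - ∑ j ∈ Finset.univ.erase i, x j)
        + ∑ j ∈ Finset.univ.erase i,
            α j * x j * mp j /
              ((m - ∑ k ∈ Finset.univ.erase i, x k) * (mp j + x j))
      ≤ mp i / m := by
  intro i x hx hS
  set S := ∑ j ∈ Finset.univ.erase i, x j with hSdef
  have hm : 0 < m := (hmp i).trans (hmmax i)
  have hmS : 0 < m - S := by linarith [hmmax i]
  have hα' : ∀ j, α j ≤ 1 - mp i / m := fun j => by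
    have h := Finset.le_sup' mp (Finset.mem_univ i)
    have h2 := div_le_div_of_nonneg_right h hm.le
    linarith [hαle j]
  have hterm : ∀ j ∈ Finset.univ.erase i,
      α j * x j * mp j / ((m - S) * (mp j + x j)) ≤ (1 - mp i / m) / (m - S) * x j := by
    intro j hj
    have hxj := hx j (Finset.ne_of_mem_erase hj)
    have hmj := hmp j
    have hdil : mp j / (mp j + x j) ≤ 1 := (div_le_one (by linarith)).2 (by linarith)
    calc α j * x j * mp j / ((m - S) * (mp j + x j))
        = α j * x j / (m - S) * (mp j / (mp j + x j)) := by
          rw [div_mul_div_comm]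
      _ ≤ α j * x j / (m - S) :=
          mul_le_of_le_one_right
            (div_nonneg (mul_nonneg (hα j).1.le hxj) hmS.le) hdil
      _ ≤ (1 - mp i / m) * x j / (m - S) :=
          div_le_div_of_nonneg_right (mul_le_mul_of_nonneg_right (hα' j) hxj) hmS.le
      _ = (1 - mp i / m) / (m - S) * x j := by ring
  have hle := Finset.sum_le_sum hterm
  rw [← Finset.mul_sum, ← hSdef] at hle
  have hid : (mp i - S) / (m - S) + (1 - mp i / m) / (m - S) * S = mp i / m := by
    field_simp
    ring
  linarith
end

section
/- In the two-pool DPBW game, assume 1/2 < α₁ < 1, 1/2 < α₂ < 1, α₁ ≤ 1 − m₂/m, α₂ ≤ 1 − m₁/m, and m > 3(m₁ + m₂). Then (x₁, x₂) is a Nash equilibrium if and only if (x₁, x₂) = (0, 0); i.e., the game has the unique Nash equilibrium in which neither pool infiltrates the other. -/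
/-!
Playing `0` strictly dominates every other strategy, for each pool. For pool 1, the factor of `U1`
in front of `r1` is positive and does not depend on `x1`, so only `r1` matters. Clearing denominators
in `r1 x y < r1 0 y` and dividing by `x > 0` leaves a polynomial inequality that is affine and
increasing in `x`, so it suffices to have its weak form at `x = 0`; there it follows from
`1 - a1 ≥ m2 / m`, `1 - a2 ≥ m1 / m` and `a2 * (m - y) ≥ m1`
(`dominance_poly_zero`, `dominance_poly`).
Pool 2 is pool 1 with the indices exchanged (`U2_eq_U1_swap`).
A profile of strictly dominant strategies is the unique Nash equilibrium.
-/


/-- Closed-form reward of pool 1 in the two-pool DPBW game. -/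
noncomputable def r1 (m m1 m2 a1 a2 x1 x2 : ℝ) : ℝ :=
  (m1 + x2) * ((m1 - x1) * (m2 + x1) + a2 * x1 * (m2 - x2)) /
    ((m - x1 - x2) * ((m1 + x2) * (m2 + x1) - a1 * a2 * x1 * x2))

/-- Closed-form reward of pool 2 in the two-pool DPBW game. -/
noncomputable def r2 (m m1 m2 a1 a2 x1 x2 : ℝ) : ℝ :=
  (m2 + x1) * ((m2 - x2) * (m1 + x2) + a1 * x2 * (m1 - x1)) /
    ((m - x1 - x2) * ((m2 + x1) * (m1 + x2) - a1 * a2 * x1 * x2))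

/-- Utility of pool 1 in the two-pool DPBW game. -/
noncomputable def U1 (m m1 m2 a1 a2 x1 x2 : ℝ) : ℝ :=
  (1 - a1 + m1 * a1 / (m1 + x2)) * r1 m m1 m2 a1 a2 x1 x2

/-- Utility of pool 2 in the two-pool DPBW game. -/
noncomputable def U2 (m m1 m2 a1 a2 x1 x2 : ℝ) : ℝ :=
  (1 - a2 + m2 * a2 / (m2 + x1)) * r2 m m1 m2 a1 a2 x1 x2

/-- `(x1, x2)` is a Nash equilibrium of the two-pool DPBW game. -/
def IsNash (m m1 m2 a1 a2 x1 x2 : ℝ) : Prop :=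
  (∀ x1' ∈ Set.Icc (0 : ℝ) m1, U1 m m1 m2 a1 a2 x1' x2 ≤ U1 m m1 m2 a1 a2 x1 x2) ∧
  (∀ x2' ∈ Set.Icc (0 : ℝ) m2, U2 m m1 m2 a1 a2 x1 x2' ≤ U2 m m1 m2 a1 a2 x1 x2)

/-- The value at `x = 0` of the polynomial in `dominance_poly`. -/
theorem dominance_poly_zero {m m1 m2 a1 a2 y : ℝ} (hm1 : 0 < m1) (hm2 : 0 < m2)
    (ha2 : 1 / 2 < a2) (hA1 : a1 * m ≤ m - m2) (hA2 : a2 * m ≤ m - m1)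
    (hm : 3 * (m1 + m2) < m) (hy : 0 ≤ y) (hy' : y ≤ m2) :
    0 ≤ (m - y) * (m1 + y) * (m2 - a2 * (m2 - y)) - m1 * (m - y) * a1 * a2 * y
      - m1 * (m1 + y) * m2 := by
  have hm0 : 0 < m := by linarith
  have hmy : 0 < m - y := by linarith
  have hk : m1 ≤ (m - y) * a2 := by nlinarith
  -- Multiplied by `m`, the expression is a sum of four nonnegative terms.
  have h1 : 0 ≤ (m - y) * (m1 + y) * m2 * (m - m1 - a2 * m) :=
    mul_nonneg (by positivity) (by linarith)
  have h2 : 0 ≤ (m - y) * a2 * y * m1 * (m - m2 - a1 * m) :=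
    mul_nonneg (by positivity) (by linarith)
  have h3 : 0 ≤ (m - y) * a2 * y * y * (m - m2) :=
    mul_nonneg (by positivity) (by linarith)
  have h4 : 0 ≤ (m1 + y) * m2 * y * ((m - y) * a2 - m1) :=
    mul_nonneg (by positivity) (by linarith)
  refine nonneg_of_mul_nonneg_right (a := m) ?_ hm0
  linear_combination h1 + h2 + h3 + h4

/-- The inequality `r1 x y < r1 0 y` after clearing denominators and dividing by `x`. -/
theorem dominance_poly {m m1 m2 a1 a2 x y : ℝ} (hm1 : 0 < m1) (hm2 : 0 < m2)
    (ha1 : 1 / 2 < a1) (ha2 : 1 / 2 < a2)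
    (hA1 : a1 * m ≤ m - m2) (hA2 : a2 * m ≤ m - m1)
    (hm : 3 * (m1 + m2) < m) (hx : 0 < x) (hy : 0 ≤ y) (hy' : y ≤ m2) :
    0 < (m - y) * (m1 + y) * (m2 + x - a2 * (m2 - y)) - m1 * (m - y) * a1 * a2 * y
      - m1 * ((m1 + y) * (m2 + x) - a1 * a2 * x * y) := by
  have h0 := dominance_poly_zero hm1 hm2 ha2 hA1 hA2 hm hy hy'
  have h1 : 0 < x * ((m1 + y) * (m - y - m1)) :=
    mul_pos hx (mul_pos (by linarith) (by linarith))
  have h2 : 0 ≤ x * (m1 * a1 * a2 * y) := by positivity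
  linear_combination h0 + h1 + h2

/-- Infiltrating with any positive power `x` is strictly worse for pool 1 than not infiltrating,
whatever pool 2 does. -/
theorem U1_lt_U1_zero {m m1 m2 a1 a2 x y : ℝ} (hm1 : 0 < m1) (hm2 : 0 < m2)
    (ha1 : 1 / 2 < a1) (ha1' : a1 < 1) (ha2 : 1 / 2 < a2) (ha2' : a2 < 1)
    (hA1 : a1 ≤ 1 - m2 / m) (hA2 : a2 ≤ 1 - m1 / m)
    (hm : 3 * (m1 + m2) < m) (hx : 0 < x) (hx' : x ≤ m1) (hy : 0 ≤ y) (hy' : y ≤ m2) :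
    U1 m m1 m2 a1 a2 x y < U1 m m1 m2 a1 a2 0 y := by
  have hm0 : 0 < m := by linarith
  have hB1 : a1 * m ≤ m - m2 := by
    have h := mul_le_mul_of_nonneg_right hA1 hm0.le
    rwa [sub_mul, div_mul_cancel₀ _ hm0.ne', one_mul] at h
  have hB2 : a2 * m ≤ m - m1 := by
    have h := mul_le_mul_of_nonneg_right hA2 hm0.le
    rwa [sub_mul, div_mul_cancel₀ _ hm0.ne', one_mul] at h
  have hP := dominance_poly hm1 hm2 ha1 ha2 hB1 hB2 hm hx hy hy'
  have hmy : 0 < m - y := by linarith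
  have hmxy : 0 < m - x - y := by linarith
  have h1y : 0 < m1 + y := by linarith
  have haa : a1 * a2 < 1 := by nlinarith
  have hD : 0 < (m1 + y) * (m2 + x) - a1 * a2 * x * y := by
    have h1 : 0 < m1 * m2 + m1 * x + m2 * y := by positivity
    have h2 : 0 ≤ (1 - a1 * a2) * (x * y) := mul_nonneg (by linarith) (by positivity)
    linear_combination h1 + h2
  have hc : 0 < 1 - a1 + m1 * a1 / (m1 + y) := by
    have : 0 < m1 * a1 / (m1 + y) := by positivity
    linarith
  unfold U1 r1
  refine mul_lt_mul_of_pos_left ?_ hc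
  rw [div_lt_div_iff₀ (mul_pos hmxy hD) (by simp only [sub_zero, add_zero, mul_zero, zero_mul]; positivity)]
  -- The difference of the two sides is `x` times the polynomial of `dominance_poly`, up to a
  -- positive factor.
  have hQ := mul_pos (mul_pos (mul_pos hx h1y) hm2) hP
  linear_combination hQ

theorem U2_eq_U1_swap (m m1 m2 a1 a2 x y : ℝ) :
    U2 m m1 m2 a1 a2 x y = U1 m m2 m1 a2 a1 y x := by
  unfold U1 U2 r1 r2
  rw [sub_right_comm m x y, mul_comm a1 a2, mul_right_comm (a2 * a1) x y]

/-- **Uniqueness of Nash equilibrium in the two-pool DPBW game.** Under the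
stated conditions on the deduction parameters and `m > 3(m₁ + m₂)`, a profile
`(x₁, x₂)` is a Nash equilibrium iff `(x₁, x₂) = (0, 0)`. -/
theorem two_pool_unique_nash
    (m m1 m2 a1 a2 : ℝ)
    (hm1 : 0 < m1) (hm2 : 0 < m2)
    (ha1 : 1 / 2 < a1) (ha1' : a1 < 1)
    (ha2 : 1 / 2 < a2) (ha2' : a2 < 1)
    (hA1 : a1 ≤ 1 - m2 / m) (hA2 : a2 ≤ 1 - m1 / m)
    (hm : 3 * (m1 + m2) < m) :
    ∀ x1 ∈ Set.Icc (0 : ℝ) m1, ∀ x2 ∈ Set.Icc (0 : ℝ) m2,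
      (IsNash m m1 m2 a1 a2 x1 x2 ↔ (x1 = 0 ∧ x2 = 0)) := by
  intro x1 hx1 x2 hx2
  have dom1 : ∀ x y, 0 < x → x ≤ m1 → 0 ≤ y → y ≤ m2 →
      U1 m m1 m2 a1 a2 x y < U1 m m1 m2 a1 a2 0 y := fun x y =>
    U1_lt_U1_zero hm1 hm2 ha1 ha1' ha2 ha2' hA1 hA2 hm
  have dom2 : ∀ x y, 0 ≤ x → x ≤ m1 → 0 < y → y ≤ m2 →
      U2 m m1 m2 a1 a2 x y < U2 m m1 m2 a1 a2 x 0 := fun x y hx hx' hy hy' => by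
    simp only [U2_eq_U1_swap]
    exact U1_lt_U1_zero hm2 hm1 ha2 ha2' ha1 ha1' hA2 hA1 (by linarith) hy hy' hx hx'
  constructor
  · rintro ⟨h1, h2⟩
    constructor
    · by_contra hne
      have := dom1 x1 x2 (lt_of_le_of_ne hx1.1 (Ne.symm hne)) hx1.2 hx2.1 hx2.2
      exact absurd (h1 0 ⟨le_rfl, hm1.le⟩) (not_le.mpr this)
    · by_contra hne
      have := dom2 x1 x2 hx1.1 hx1.2 (lt_of_le_of_ne hx2.1 (Ne.symm hne)) hx2.2
      exact absurd (h2 0 ⟨le_rfl, hm2.le⟩) (not_le.mpr this)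
  · rintro ⟨rfl, rfl⟩
    refine ⟨fun x hx => ?_, fun y hy => ?_⟩
    · rcases hx.1.eq_or_lt with rfl | h
      · exact le_rfl
      · exact (dom1 x 0 h hx.2 le_rfl hm2.le).le
    · rcases hy.1.eq_or_lt with rfl | h
      · exact le_rfl
      · exact (dom2 0 y le_rfl hm1.le h hy.2).le
end

section
/- In the two-pool DPBW game, for any x₁ ∈ [0,m₁] and x₂ ∈ [0,m₂] such that m − x₁ − x₂ > 0 and (m₁+x₂)(m₂+x₁) − α₁α₂x₁x₂ > 0, the closed-form reward functions r₁ and r₂ solve the reward system: r₁(x₁,x₂) = (m₁ − x₁)/(m − x₁ − x₂) + α₂·r₂(x₁,x₂)·x₁/(m₂ + x₁) and r₂(x₁,x₂) = (m₂ − x₂)/(m − x₁ − x₂) + α₁·r₁(x₁,x₂)·x₂/(m₁ + x₂). -/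
/-- The closed-form reward functions `r1`, `r2` solve the reward system of
equations of the two-pool DPBW game. -/
theorem rewards_solve_system
    (m m1 m2 a1 a2 : ℝ)
    (hm1 : 0 < m1) (hm2 : 0 < m2) (hm : m1 + m2 < m)
    (ha1 : 0 < a1) (ha1' : a1 < 1) (ha2 : 0 < a2) (ha2' : a2 < 1) :
    ∀ x1 ∈ Set.Icc (0 : ℝ) m1, ∀ x2 ∈ Set.Icc (0 : ℝ) m2,
      0 < m - x1 - x2 →
      0 < (m1 + x2) * (m2 + x1) - a1 * a2 * x1 * x2 →
      r1 m m1 m2 a1 a2 x1 x2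
          = (m1 - x1) / (m - x1 - x2) + a2 * r2 m m1 m2 a1 a2 x1 x2 * x1 / (m2 + x1) ∧
      r2 m m1 m2 a1 a2 x1 x2
          = (m2 - x2) / (m - x1 - x2) + a1 * r1 m m1 m2 a1 a2 x1 x2 * x2 / (m1 + x2) := by
  rintro x1 ⟨hx1, -⟩ x2 ⟨hx2, -⟩ hM hD
  have hM' : m - x1 - x2 ≠ 0 := hM.ne'
  have hP : m1 + x2 ≠ 0 := by positivity
  have hQ : m2 + x1 ≠ 0 := by positivity
  have hD' : (m1 + x2) * (m2 + x1) - a1 * a2 * x1 * x2 ≠ 0 := hD.ne'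
  unfold r1 r2
  rw [mul_comm (m2 + x1) (m1 + x2)]
  -- The common denominator stays opaque while denominators are cleared; its value is only
  -- needed for the polynomial identities that remain.
  generalize hE : (m1 + x2) * (m2 + x1) - a1 * a2 * x1 * x2 = D at hD' ⊢
  constructor
  · field_simp
    rw [← hE]
    ring
  · field_simp
    rw [← hE]
    ring
end

section
/- Assume m₁ > 0, m₂ > 0, 1/2 < α₁ < 1, 1/2 < α₂ < 1, α₁ ≤ 1 − m₂/m, α₂ ≤ 1 − m₁/m, and m ≥ 3(m₁ + m₂). Then there is no pair (x₁, x₂) with 0 < x₁ < m₁ and 0 < x₂ < m₂ such that Q₁(x₁,x₂) = 0 and Q₂(x₁,x₂) = 0 simultaneously. -/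
/-!
In fact `Q₁` alone is negative on the whole box `0 < x₁ < m₁`, `0 < x₂ < m₂` (`Q1_neg`), so `Q₂`
plays no role. Collecting `-Q₁` by monomials in `x₁, x₂`, each monomial has a coefficient of the
form `m · (nonnegative) - (terms free of m)`, and the lower bounds on `m` make the positive part
win. The one exception is `x₁² x₂`, whose possible deficit is at most
`(2 m₁ + 2 m₂) x₁² x₂`; it is absorbed by the surplus in `x₁²` (using `x₂ < m₂`)
and in `x₁ x₂` (using `x₁ < m₁`).
-/

/-- The coefficient `c₁(x₂)` (constant term of `Q₁` as a polynomial in `x₁`)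
from the two-pool DPBW game. -/
def c1 (m m1 m2 a1 a2 x2 : ℝ) : ℝ :=
  a2 * m2 * x2 ^ 3
    + (-(m * a2 * m2) + a2 * m1 * m2 - a1 * a2 * m1 * m2 + m2 ^ 2 - a2 * m2 ^ 2) * x2 ^ 2
    + (-(m * a2 * m1 * m2) + m * a1 * a2 * m1 * m2 - m * m2 ^ 2 + m * a2 * m2 ^ 2
        + 2 * m1 * m2 ^ 2 - a2 * m1 * m2 ^ 2) * x2
    + (a2 - 1) * m * m1 * m2 ^ 2 + m1 ^ 2 * m2 ^ 2

/-- The coefficient `b₁(x₂)` from the two-pool DPBW game. -/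
def b1 (m m1 m2 a1 a2 x2 : ℝ) : ℝ :=
  2 * m2 * x2 ^ 2 + (-(2 * m * m2) + 4 * m1 * m2 - 2 * a1 * a2 * m1 * m2) * x2
    - 2 * m * m1 * m2 + 2 * m1 ^ 2 * m2

/-- The coefficient `a₁(x₂)` from the two-pool DPBW game. -/
def a1f (m m1 m2 a1 a2 x2 : ℝ) : ℝ :=
  (a1 * a2 ^ 2 - a1 * a2 - a2 + 1) * x2 ^ 2
    + (-(a1 * a2 ^ 2 * m2) + a1 * a2 * m - a1 * a2 * m1 - a2 * m1 + a1 * a2 * m2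
        + a2 * m2 - m + 2 * m1) * x2
    + a2 * m1 * m2 + m1 ^ 2 - m * m1

/-- The polynomial `Q₁(x₁, x₂) = a₁(x₂)x₁² + b₁(x₂)x₁ + c₁(x₂)` from the
two-pool DPBW game. -/
def Q1 (m m1 m2 a1 a2 x1 x2 : ℝ) : ℝ :=
  a1f m m1 m2 a1 a2 x2 * x1 ^ 2 + b1 m m1 m2 a1 a2 x2 * x1 + c1 m m1 m2 a1 a2 x2

/-- The symmetric polynomial `Q₂(x₁, x₂)`, obtained from `Q₁` by exchanging
the roles of `(m₁, α₁)` and `(m₂, α₂)` (and of `x₁` and `x₂`). -/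
def Q2 (m m1 m2 a1 a2 x1 x2 : ℝ) : ℝ :=
  Q1 m m2 m1 a2 a1 x2 x1

/-- The first-order polynomial `Q₁` is negative on the open box. The bounds `α₂ ≤ 1 - m₁/m` and
`α₁ ≤ 1 - m₂/m` appear with denominators cleared; only the monomials `1` and `x₂`
need them, all others being dominated thanks to `m ≥ 3(m₁ + m₂)`. -/
lemma Q1_neg {m m1 m2 a1 a2 x1 x2 : ℝ}
    (ha1 : 1 / 2 < a1) (ha1' : a1 < 1) (ha2 : 1 / 2 < a2) (ha2' : a2 < 1)
    (hA1 : m2 ≤ m * (1 - a1)) (hA2 : m1 ≤ m * (1 - a2))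
    (hm : 3 * (m1 + m2) ≤ m)
    (hx1 : 0 < x1) (hx1' : x1 < m1) (hx2 : 0 < x2) (hx2' : x2 < m2) :
    Q1 m m1 m2 a1 a2 x1 x2 < 0 := by
  have hm1 : 0 < m1 := hx1.trans hx1'
  have hm2 : 0 < m2 := hx2.trans hx2'
  have hab : 0 < a1 * a2 := by positivity
  have hab' : a1 * a2 < 1 := by nlinarith
  have T0 : 0 ≤ m1 * m2 ^ 2 * (m * (1 - a2) - m1) := by
    have : 0 ≤ m * (1 - a2) - m1 := by linarith
    positivity
  -- Here `1/2 < a2` enters, in the form `(1 - a2) * m1 * m2 ≤ a2 * m1 * m2`.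
  have T1 : 0 ≤ m2 * x2 * (m * (a2 * m1 * (1 - a1) + m2 * (1 - a2)) - m1 * m2 * (2 - a2)) := by
    have h1 : 0 ≤ a2 * m1 * (m * (1 - a1) - m2) :=
      mul_nonneg (by positivity) (by linarith)
    have h2 : 0 ≤ m2 * (m * (1 - a2) - m1) := mul_nonneg hm2.le (by linarith)
    have h3 : 0 ≤ (2 * a2 - 1) * (m1 * m2) := mul_nonneg (by linarith) (by positivity)
    exact mul_nonneg (by positivity) (by linarith)
  have T2 : 0 ≤ m2 * x2 ^ 2 * (a2 * m - a2 * x2 - a2 * m1 * (1 - a1) - m2 * (1 - a2)) := by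
    have h1 : 0 ≤ a2 * (m - 3 * (m1 + m2)) := mul_nonneg (by linarith) (by linarith)
    have h2 : 0 ≤ a2 * (m2 - x2) := mul_nonneg (by linarith) (by linarith)
    have h3 : 0 < a1 * a2 * m1 := by positivity
    have h4 : 0 < a2 * m1 := by positivity
    have h5 : 0 < (2 * a2 - 1) * m2 := mul_pos (by linarith) hm2
    have h6 : 0 < a2 * m2 := by positivity
    exact mul_nonneg (by positivity) (by linarith)
  have T3 : 0 < 2 * m1 * m2 * x1 * (m - m1) := mul_pos (by positivity) (by linarith)
  have T4 : 0 ≤ 2 * m2 * x1 * x2 * (m - x2 - m1 * (2 - a1 * a2) - x1) := by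
    have h : 0 < m1 * (a1 * a2) := by positivity
    exact mul_nonneg (by positivity) (by linarith)
  have T5 : 0 ≤ x1 ^ 2 * m1 * (m - m1 - a2 * m2 - 2 * x2) := by
    have h : 0 < (1 - a2) * m2 := mul_pos (by linarith) hm2
    exact mul_nonneg (by positivity) (by linarith)
  -- The only coefficient of indefinite sign is that of `x1 ^ 2 * x2`; the amounts
  -- `2 * m2` and `2 * m1` that compensate it are taken from the slack in `T4` and `T5`.
  have T6 : 0 ≤ x1 ^ 2 * x2 * (m * (1 - a1 * a2) - (1 - a2) * (1 - a1 * a2) * x2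
      - m1 * (2 - a2 - a1 * a2) - a2 * m2 * (1 + a1 * (1 - a2)) + 2 * m2 + 2 * m1) := by
    have h1 : 0 ≤ m * (1 - a1 * a2) := mul_nonneg (by linarith) (by linarith)
    have h2 : 0 ≤ (1 - a2) * (1 - a1 * a2) * (m2 - x2) :=
      mul_nonneg (mul_nonneg (by linarith) (by linarith)) (by linarith)
    have h3 : 0 ≤ m1 * (a2 + a1 * a2) := by positivity
    exact mul_nonneg (by positivity) (by linarith)
  unfold Q1 a1f b1 c1
  linarith

/-- **Lemma 1 of the DPBW paper.** `Q₁` and `Q₂` cannot vanish simultaneously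
at an interior profile. -/
theorem Q1_Q2_not_both_zero
    (m m1 m2 a1 a2 : ℝ)
    (hm1 : 0 < m1) (hm2 : 0 < m2)
    (ha1 : 1 / 2 < a1) (ha1' : a1 < 1)
    (ha2 : 1 / 2 < a2) (ha2' : a2 < 1)
    (hA1 : a1 ≤ 1 - m2 / m) (hA2 : a2 ≤ 1 - m1 / m)
    (hm : 3 * (m1 + m2) ≤ m) :
    ¬ ∃ x1 x2 : ℝ, 0 < x1 ∧ x1 < m1 ∧ 0 < x2 ∧ x2 < m2 ∧
      Q1 m m1 m2 a1 a2 x1 x2 = 0 ∧ Q2 m m1 m2 a1 a2 x1 x2 = 0 := by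
  have hm0 : 0 < m := by linarith
  rintro ⟨x1, x2, hx1, hx1', hx2, hx2', hQ, -⟩
  have hB1 : m2 ≤ m * (1 - a1) := (div_le_iff₀' hm0).1 (by linarith)
  have hB2 : m1 ≤ m * (1 - a2) := (div_le_iff₀' hm0).1 (by linarith)
  exact (Q1_neg ha1 ha1' ha2 ha2' hB1 hB2 hm hx1 hx1' hx2 hx2').ne hQ
end

section
/- Assume m₁ > 0, m₂ > 0, 1/2 < α₁ < 1, 1/2 < α₂ < 1, α₁ ≤ 1 − m₂/m, α₂ ≤ 1 − m₁/m, and m ≥ 3(m₁ + m₂). Then c₁(x₂) ≤ 0 for every x₂ ∈ [0, m₂]. -/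
/-- **Claim 1 of the DPBW paper.** `c₁(x₂) ≤ 0` on `[0, m₂]`. -/
theorem c1_nonpos
    (m m1 m2 a1 a2 : ℝ)
    (hm1 : 0 < m1) (hm2 : 0 < m2)
    (ha1 : 1 / 2 < a1) (ha1' : a1 < 1)
    (ha2 : 1 / 2 < a2) (ha2' : a2 < 1)
    (hA1 : a1 ≤ 1 - m2 / m) (hA2 : a2 ≤ 1 - m1 / m)
    (hm : 3 * (m1 + m2) ≤ m) :
    ∀ x2 ∈ Set.Icc (0 : ℝ) m2, c1 m m1 m2 a1 a2 x2 ≤ 0 := by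
  rintro x ⟨hx0, hx⟩
  have hm0 : 0 < m := by linarith
  have h1 : m2 ≤ (1 - a1) * m := (div_le_iff₀ hm0).mp (by linarith)
  have h2 : m1 ≤ (1 - a2) * m := (div_le_iff₀ hm0).mp (by linarith)
  have hK : m1 * m2 * (m1 - (1 - a2) * m) ≤ 0 :=
    mul_nonpos_of_nonneg_of_nonpos (by positivity) (by linarith)
  have hL : -((1 - a1) * m) * (a2 * m1) - (1 - a2) * m * m2 + m1 * m2 * (2 - a2) ≤ 0 := by
    have e1 : m2 * (a2 * m1) ≤ (1 - a1) * m * (a2 * m1) :=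
      mul_le_mul_of_nonneg_right h1 (mul_nonneg (by linarith) hm1.le)
    have e2 : m1 * m2 ≤ (1 - a2) * m * m2 := mul_le_mul_of_nonneg_right h2 hm2.le
    have e3 : 0 ≤ m1 * m2 * (2 * a2 - 1) := mul_nonneg (by positivity) (by linarith)
    linarith
  have hP : a2 * x - m * a2 + a2 * m1 * (1 - a1) + m2 * (1 - a2) ≤ 0 := by
    have e1 : a2 * m1 * (1 - a1) ≤ a2 * m1 * 1 :=
      mul_le_mul_of_nonneg_left (by linarith) (mul_nonneg (by linarith) hm1.le)
    have e2 : m2 * (1 - a2) ≤ m2 * a2 := mul_le_mul_of_nonneg_left (by linarith) hm2.le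
    have e3 : 0 ≤ a2 * (m - x - m1 - m2) := mul_nonneg (by linarith) (by linarith)
    linarith
  have key : c1 m m1 m2 a1 a2 x
      = m2 * (x ^ 2 * (a2 * x - m * a2 + a2 * m1 * (1 - a1) + m2 * (1 - a2))
        + x * (-((1 - a1) * m) * (a2 * m1) - (1 - a2) * m * m2 + m1 * m2 * (2 - a2))
        + m1 * m2 * (m1 - (1 - a2) * m)) := by
    unfold c1; ring
  rw [key]
  refine mul_nonpos_of_nonneg_of_nonpos hm2.le ?_
  have q1 := mul_nonpos_of_nonneg_of_nonpos (sq_nonneg x) hP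
  have q2 := mul_nonpos_of_nonneg_of_nonpos hx0 hL
  linarith
end

section
/- Assume m₁ > 0, m₂ > 0, 0 < α₁ < 1, 0 < α₂ ≤ 1 − m₁/m, and m ≥ 2(m₁ + m₂). Then c₁(m₂) < 0; equivalently, m₁² + m₂² − m·m₂ − m·m₁ + α₁α₂·m·m₁ − α₁α₂·m₁·m₂ + 2m₁m₂ < 0. -/
/-- `c₁(m₂) < 0`; equivalently (dividing by `m₂²`),
`m₁² + m₂² − m·m₂ − m·m₁ + α₁α₂·m·m₁ − α₁α₂·m₁·m₂ + 2m₁m₂ < 0`. -/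
theorem c1_at_m2_neg
    (m m1 m2 a1 a2 : ℝ)
    (hm1 : 0 < m1) (hm2 : 0 < m2)
    (ha1 : 0 < a1) (ha1' : a1 < 1)
    (ha2 : 0 < a2) (hA2 : a2 ≤ 1 - m1 / m)
    (hm : 2 * (m1 + m2) ≤ m) :
    c1 m m1 m2 a1 a2 m2 < 0 ∧
    m1 ^ 2 + m2 ^ 2 - m * m2 - m * m1 + a1 * a2 * m * m1
      - a1 * a2 * m1 * m2 + 2 * m1 * m2 < 0 := by
  have hm0 : 0 < m := by linarith
  have key : m1 ^ 2 + m2 ^ 2 - m * m2 - m * m1 + a1 * a2 * m * m1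
      - a1 * a2 * m1 * m2 + 2 * m1 * m2 < 0 := by
    have ha2m : a2 * m ≤ m - m1 := by
      have h := mul_le_mul_of_nonneg_right hA2 hm0.le
      have e : (1 - m1 / m) * m = m - m1 := by field_simp
      linarith
    have ht : a1 * a2 * m < m - m1 := by
      have h : a1 * (a2 * m) < 1 * (a2 * m) :=
        mul_lt_mul_of_pos_right ha1' (mul_pos ha2 hm0)
      linarith
    have h1 : 0 < m1 * (m - m2) * (m - m1 - a1 * a2 * m) :=
      mul_pos (mul_pos hm1 (by linarith)) (by linarith)
    have h2 : 0 < m2 * (m * (m - (m1 + m2)) - m1 ^ 2) := by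
      refine mul_pos hm2 ?_
      have h : m1 * m1 < m * (m - (m1 + m2)) :=
        mul_lt_mul'' (by linarith) (by linarith) hm1.le hm1.le
      linarith
    -- `m` times the left-hand side is minus the sum of the two positive quantities `h1`, `h2`.
    refine neg_of_mul_neg_right (a := m) ?_ hm0.le
    linarith
  refine ⟨?_, key⟩
  have e : c1 m m1 m2 a1 a2 m2 = m2 ^ 2 * (m1 ^ 2 + m2 ^ 2 - m * m2 - m * m1
      + a1 * a2 * m * m1 - a1 * a2 * m1 * m2 + 2 * m1 * m2) := by
    unfold c1; ring
  rw [e]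
  exact mul_neg_of_pos_of_neg (pow_pos hm2 2) key
end

section
/- Assume m₁ > 0, m₂ > 0, 0 ≤ α₁α₂ ≤ 1, and m ≥ 3(m₁ + m₂). Then b₁(x₂) < 0 for every x₂ ∈ [0, m₂]. -/
/-- **Claim 2 of the DPBW paper.** `b₁(x₂) < 0` on `[0, m₂]`. -/
theorem b1_neg
    (m m1 m2 a1 a2 : ℝ)
    (hm1 : 0 < m1) (hm2 : 0 < m2)
    (ha : 0 ≤ a1 * a2) (ha' : a1 * a2 ≤ 1)
    (hm : 3 * (m1 + m2) ≤ m) :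
    ∀ x2 ∈ Set.Icc (0 : ℝ) m2, b1 m m1 m2 a1 a2 x2 < 0 := by
  rintro x ⟨hx0, hx⟩
  -- Half of `b₁ / m₂` is `x (x - m + 2 m₁ - α₁α₂ m₁) + m₁ (m₁ - m)`, where the first
  -- summand is nonpositive and the second is negative.
  have hp : 0 ≤ a1 * a2 * m1 := mul_nonneg ha hm1.le
  have h1 : x * (x - m + 2 * m1 - a1 * a2 * m1) ≤ 0 :=
    mul_nonpos_of_nonneg_of_nonpos hx0 (by linarith)
  have h2 : m1 * (m1 - m) < 0 := mul_neg_of_pos_of_neg hm1 (by linarith)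
  have key : b1 m m1 m2 a1 a2 x
      = 2 * m2 * (x * (x - m + 2 * m1 - a1 * a2 * m1) + m1 * (m1 - m)) := by
    unfold b1
    ring
  rw [key]
  exact mul_neg_of_pos_of_neg (by linarith) (by linarith)
end

section
/- Assume m₁ > 0, m₂ > 0, 1/2 < α₁ < 1, 1/2 < α₂ < 1, α₁ ≤ 1 − m₂/m, α₂ ≤ 1 − m₁/m, and m ≥ 3(m₁ + m₂). Then Q₁(x₁, x₂) ≠ 0 for every x₁ with 0 < x₁ < m₁ and every x₂ ∈ {0, m₂}. -/
/-- The common shape of the leading and constant coefficients at `x₂ = m₂`. It is negative because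
`p u (m - v) ≤ u (a m) ≤ u (m - u)`, which leaves at most `v (2 u + v - m) < 0`. -/
theorem coeff_neg {m u v a p : ℝ} (hu : 0 < u) (hv : 0 < v) (hp : 0 ≤ p) (hpa : p ≤ a)
    (ha : a * m ≤ m - u) (hm : 3 * (u + v) ≤ m) :
    (u + v) ^ 2 - m * (u + v) + p * u * (m - v) < 0 := by
  have h1 : p * (m - v) ≤ m - u := by
    have : p * m ≤ a * m := mul_le_mul_of_nonneg_right hpa (by linarith)
    have : 0 ≤ p * v := mul_nonneg hp hv.le
    linarith
  have h2 : u * (p * (m - v)) ≤ u * (m - u) := mul_le_mul_of_nonneg_left h1 hu.le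
  have h3 : 0 < v * (m - 2 * u - v) := mul_pos hv (by linarith)
  linarith

/-- **Lemma 2 of the DPBW paper.** `Q₁(x₁, x₂) ≠ 0` for every `x₁ ∈ (0, m₁)`
and every `x₂ ∈ {0, m₂}`. -/
theorem Q1_ne_zero_on_boundary
    (m m1 m2 a1 a2 : ℝ)
    (hm1 : 0 < m1) (hm2 : 0 < m2)
    (ha1 : 1 / 2 < a1) (ha1' : a1 < 1)
    (ha2 : 1 / 2 < a2) (ha2' : a2 < 1)
    (hA1 : a1 ≤ 1 - m2 / m) (hA2 : a2 ≤ 1 - m1 / m)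
    (hm : 3 * (m1 + m2) ≤ m) :
    ∀ x1 : ℝ, 0 < x1 → x1 < m1 →
      ∀ x2 ∈ ({0, m2} : Set ℝ), Q1 m m1 m2 a1 a2 x1 x2 ≠ 0 := by
  intro x1 hx1 _ x2 hx2
  have hm0 : 0 < m := by linarith
  have hA1m : a1 * m ≤ m - m2 := by
    have h := mul_le_mul_of_nonneg_right hA1 hm0.le
    rwa [sub_mul, div_mul_cancel₀ _ hm0.ne', one_mul] at h
  have hA2m : a2 * m ≤ m - m1 := by
    have h := mul_le_mul_of_nonneg_right hA2 hm0.le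
    rwa [sub_mul, div_mul_cancel₀ _ hm0.ne', one_mul] at h
  have key : ∀ a b c : ℝ, a < 0 → b < 0 → c ≤ 0 → a * x1 ^ 2 + b * x1 + c < 0 := by
    intro a b c ha hb hc
    have := mul_neg_of_neg_of_pos ha (pow_pos hx1 2)
    have := mul_neg_of_neg_of_pos hb hx1
    linarith
  have hs : 0 < (m1 + m2) * (m - m1 - m2) := mul_pos (by linarith) (by linarith)
  apply ne_of_lt
  unfold Q1
  rcases hx2 with rfl | rfl
  · apply key
    · have : a2 * m2 ≤ 1 * m2 := mul_le_mul_of_nonneg_right ha2'.le hm2.le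
      have : 0 < m1 * (m - m1 - a2 * m2) := mul_pos hm1 (by linarith)
      unfold a1f
      linarith
    · have : 0 < m1 * m2 * (m - m1) := mul_pos (mul_pos hm1 hm2) (by linarith)
      unfold b1
      linarith
    · have : 0 ≤ m1 * m2 ^ 2 * (m - m1 - a2 * m) := mul_nonneg (by positivity) (by linarith)
      unfold c1
      linarith
  · have hp : 0 ≤ a1 * a2 := mul_nonneg (by linarith) (by linarith)
    have hp1 : a1 * a2 ≤ a1 := mul_le_of_le_one_right (by linarith) ha2'.le
    have hp2 : a1 * a2 ≤ a2 := mul_le_of_le_one_left (by linarith) ha1'.le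
    apply key
    · have := coeff_neg hm2 hm1 hp hp1 hA1m (by linarith)
      unfold a1f
      linarith
    · have : 0 ≤ a1 * a2 * (m1 * x2) := mul_nonneg hp (by positivity)
      have : 0 < x2 * ((m1 + x2) * (m - m1 - x2) + a1 * a2 * (m1 * x2)) :=
        mul_pos hm2 (by linarith)
      unfold b1
      linarith
    · have := mul_neg_of_pos_of_neg (pow_pos hm2 2) (coeff_neg hm1 hm2 hp hp2 hA2m hm)
      unfold c1
      linarith
end

section
/- Assume m₁ > 0, m₂ > 0, 1/2 < α₁ < 1, 1/2 < α₂ < 1, α₁ ≤ 1 − m₂/m, α₂ ≤ 1 − m₁/m, and m ≥ 3(m₁ + m₂). Then Q₁(m₁, 0) < 0 and Q₁(m₁, m₂) < 0. -/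
/-- `Q₁(m₁, 0) < 0` and `Q₁(m₁, m₂) < 0`. -/
theorem Q1_at_corners_neg
    (m m1 m2 a1 a2 : ℝ)
    (hm1 : 0 < m1) (hm2 : 0 < m2)
    (ha1 : 1 / 2 < a1) (ha1' : a1 < 1)
    (ha2 : 1 / 2 < a2) (ha2' : a2 < 1)
    (hA1 : a1 ≤ 1 - m2 / m) (hA2 : a2 ≤ 1 - m1 / m)
    (hm : 3 * (m1 + m2) ≤ m) :
    Q1 m m1 m2 a1 a2 m1 0 < 0 ∧ Q1 m m1 m2 a1 a2 m1 m2 < 0 := by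
  have hm0 : 0 < m := by linarith
  have hS : m1 + m2 < m := by linarith
  constructor
  · have hA : (a2 - 1) * m + m1 ≤ 0 := by
      have h := mul_le_mul_of_nonneg_right hA2 hm0.le
      rw [sub_mul, div_mul_cancel₀ _ hm0.ne'] at h
      linarith
    have hb : a2 * m2 < m2 := mul_lt_of_lt_one_left hm2 ha2'
    have e : Q1 m m1 m2 a1 a2 m1 0 = -(m1 * (m1 ^ 2 * (m - m1 - a2 * m2)
        + 2 * m1 * m2 * (m - m1) + m2 ^ 2 * -((a2 - 1) * m + m1))) := by
      unfold Q1 a1f b1 c1; ring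
    have h1 : 0 < m - m1 - a2 * m2 := by linarith
    have h2 : 0 < m - m1 := by linarith
    have h3 : 0 ≤ -((a2 - 1) * m + m1) := by linarith
    rw [e, neg_lt_zero]
    positivity
  · have e : Q1 m m1 m2 a1 a2 m1 m2 =
        -((m - (m1 + m2)) * (m1 + m2) * ((m1 + m2) ^ 2 - a1 * a2 * (m1 * m2))) := by
      unfold Q1 a1f b1 c1; ring
    have hab : a1 * a2 < 1 := by nlinarith
    have hxy : 0 < m1 * m2 := mul_pos hm1 hm2
    have h1 : 0 < m - (m1 + m2) := by linarith
    have h2 : 0 < (m1 + m2) ^ 2 - a1 * a2 * (m1 * m2) := by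
      nlinarith [mul_lt_of_lt_one_left hxy hab, sq_nonneg m1, sq_nonneg m2]
    rw [e, neg_lt_zero]
    positivity
end

section
/- Assume m₁ > 0, m₂ > 0, 0 < α₁α₂ < 1, and m ≥ 3(m₁ + m₂). Then Q̄₁(m₂) + Q̄₂(m₁) < 0. Moreover, writing m = ℓ(m₁ + m₂), the identity Q̄₁(m₂) + Q̄₂(m₁) = (4 − 2ℓ − α₁α₂ + ℓα₁α₂)(m₁ + m₂)² − 2α₁α₂m₁m₂ holds. -/
/-- The auxiliary quantity `Q̄₁(x₂)` from the two-pool DPBW game. -/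
def Qbar1 (m m1 m2 a1 a2 x2 : ℝ) : ℝ :=
  2 * m1 ^ 2 + x2 * (-m + m2 + a1 * a2 * (m - x2) + x2)
    + m1 * (-m + m2 + (3 - 2 * (a1 * a2)) * x2)

/-- The symmetric auxiliary quantity `Q̄₂(x₁)`, obtained by exchanging the
roles of `m₁` and `m₂` (keeping the same product `α₁α₂`). -/
def Qbar2 (m m1 m2 a1 a2 x1 : ℝ) : ℝ :=
  2 * m2 ^ 2 + x1 * (-m + m1 + a1 * a2 * (m - x1) + x1)
    + m2 * (-m + m1 + (3 - 2 * (a1 * a2)) * x1)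

/-- `Q̄₁(m₂) + Q̄₂(m₁) < 0`, and writing `m = ℓ(m₁ + m₂)` the closed-form
identity for the sum holds. -/
theorem Qbar_sum_neg
    (m m1 m2 a1 a2 : ℝ)
    (hm1 : 0 < m1) (hm2 : 0 < m2)
    (ha : 0 < a1 * a2) (ha' : a1 * a2 < 1)
    (hm : 3 * (m1 + m2) ≤ m) :
    Qbar1 m m1 m2 a1 a2 m2 + Qbar2 m m1 m2 a1 a2 m1 < 0 ∧
    ∀ l : ℝ, m = l * (m1 + m2) →
      Qbar1 m m1 m2 a1 a2 m2 + Qbar2 m m1 m2 a1 a2 m1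
        = (4 - 2 * l - a1 * a2 + l * (a1 * a2)) * (m1 + m2) ^ 2
            - 2 * (a1 * a2) * m1 * m2 := by
  constructor
  -- With `S = m1 + m2` and `p = a1 * a2`, the sum equals
  -- `-(2 - p) * S * (m - 3 * S) - 2 * (1 - p) * S ^ 2 - 2 * p * m1 * m2`.
  · have h1 : 0 ≤ (2 - a1 * a2) * (m1 + m2) * (m - 3 * (m1 + m2)) :=
      mul_nonneg (mul_nonneg (by linarith) (by linarith)) (by linarith)
    have h2 : 0 < (1 - a1 * a2) * (m1 + m2) ^ 2 :=
      mul_pos (by linarith) (by positivity)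
    have h3 : 0 < a1 * a2 * (m1 * m2) := mul_pos ha (mul_pos hm1 hm2)
    unfold Qbar1 Qbar2
    linarith
  · rintro l rfl
    unfold Qbar1 Qbar2
    ring
end

section
/- In the two-pool DPBW game with m > m₁ + m₂ and 0 < α₁ < 1, the profile (0, m₂) (pool 1 honest, pool 2 sending all its power to infiltrate pool 1) is not a Nash equilibrium: player 2's utility there is strictly less than her utility at (0,0), i.e., U₂(0, m₂) < m₂/m = U₂(0, 0). In particular (m₁·m₂·(1−α₁))/((m−m₂)(m₁+m₂)) < m₂/m. -/
/-- The bound common to `c = α₁` (player 2's utility at `(0, m₂)`) and `c = 1 - α₁`. -/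
theorem scaled_share_lt (m m1 m2 c : ℝ) (hm1 : 0 < m1) (hm2 : 0 < m2) (hm : m1 + m2 < m)
    (hc : c < 1) : m1 * m2 * c / ((m - m2) * (m1 + m2)) < m2 / m := by
  have hm0 : 0 < m := by linarith
  have hd : 0 < m - m2 := by linarith
  rw [div_lt_div_iff₀ (by positivity) hm0]
  have h1 : m1 * m * c < m1 * m := mul_lt_of_lt_one_right (by positivity) hc
  have h2 : m1 * m < (m - m2) * (m1 + m2) := by
    nlinarith [mul_pos hm2 (sub_pos.2 hm)]
  calc m1 * m2 * c * m = m2 * (m1 * m * c) := by ring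
    _ < m2 * ((m - m2) * (m1 + m2)) := mul_lt_mul_of_pos_left (h1.trans h2) hm2

/-- The profile `(0, m₂)` is not a Nash equilibrium of the two-pool DPBW game:
player 2's utility there is strictly below her utility `m₂/m` at `(0, 0)`; in
particular `(m₁m₂(1−α₁))/((m−m₂)(m₁+m₂)) < m₂/m`. -/
theorem profile_zero_m2_not_nash
    (m m1 m2 a1 a2 : ℝ)
    (hm1 : 0 < m1) (hm2 : 0 < m2) (hm : m1 + m2 < m)
    (ha1 : 0 < a1) (ha1' : a1 < 1) (ha2 : 0 < a2) (ha2' : a2 < 1) :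
    U2 m m1 m2 a1 a2 0 0 = m2 / m ∧
    U2 m m1 m2 a1 a2 0 m2 < m2 / m ∧
    m1 * m2 * (1 - a1) / ((m - m2) * (m1 + m2)) < m2 / m ∧
    ¬ IsNash m m1 m2 a1 a2 0 m2 := by
  have hm0 : m ≠ 0 := by linarith
  have hd : m - m2 ≠ 0 := by linarith
  have hs : m1 + m2 ≠ 0 := by linarith
  have h00 : U2 m m1 m2 a1 a2 0 0 = m2 / m := by
    simp only [U2, r2, add_zero, sub_zero, mul_zero, zero_mul]
    field_simp
    ring
  have h0 : U2 m m1 m2 a1 a2 0 m2 = m1 * m2 * a1 / ((m - m2) * (m1 + m2)) := by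
    simp only [U2, r2, add_zero, sub_zero, mul_zero, zero_mul, sub_self, zero_add]
    field_simp
    ring
  have hlt : U2 m m1 m2 a1 a2 0 m2 < m2 / m :=
    h0 ▸ scaled_share_lt m m1 m2 a1 hm1 hm2 hm ha1'
  refine ⟨h00, hlt, scaled_share_lt m m1 m2 (1 - a1) hm1 hm2 hm (by linarith), fun h => ?_⟩
  exact absurd (h.2 0 ⟨le_rfl, hm2.le⟩) (not_le.2 (h00 ▸ hlt))
end

section
/- In the two-pool DPBW game with m > m₁ + m₂ and α₁, α₂ ∈ (0,1), the profile (m₁, m₂) (both pools sending all their power to infiltrate each other) is not a Nash equilibrium: both players' rewards there are zero, r₁(m₁,m₂) = r₂(m₁,m₂) = 0, while player 1 can deviate to x₁' = 0 and obtain U₁(0, m₂) > 0. -/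
/-- The profile `(m₁, m₂)` is not a Nash equilibrium of the two-pool DPBW game:
both players' rewards there are zero, while player 1 can deviate to `x₁' = 0`
and obtain a positive utility. -/
theorem profile_m1_m2_not_nash
    (m m1 m2 a1 a2 : ℝ)
    (hm1 : 0 < m1) (hm2 : 0 < m2) (hm : m1 + m2 < m)
    (ha1 : 0 < a1) (ha1' : a1 < 1) (ha2 : 0 < a2) (ha2' : a2 < 1) :
    r1 m m1 m2 a1 a2 m1 m2 = 0 ∧
    r2 m m1 m2 a1 a2 m1 m2 = 0 ∧
    0 < U1 m m1 m2 a1 a2 0 m2 ∧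
    ¬ IsNash m m1 m2 a1 a2 m1 m2 := by
  have h1 : r1 m m1 m2 a1 a2 m1 m2 = 0 := by simp [r1]
  have h2 : r2 m m1 m2 a1 a2 m1 m2 = 0 := by simp [r2]
  have hU : 0 < U1 m m1 m2 a1 a2 0 m2 := by
    have hr : 0 < r1 m m1 m2 a1 a2 0 m2 := by
      have hd : 0 < m - 0 - m2 := by linarith
      have hp : 0 < (m1 + m2) * (m2 + 0) - a1 * a2 * 0 * m2 := by
        simp only [mul_zero, zero_mul, sub_zero, add_zero]
        positivity
      have hn : 0 < (m1 + m2) * ((m1 - 0) * (m2 + 0) + a2 * 0 * (m2 - m2)) := by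
        simp only [mul_zero, zero_mul, sub_zero, add_zero]
        positivity
      exact div_pos hn (mul_pos hd hp)
    have hs : 0 < 1 - a1 := sub_pos.mpr ha1'
    unfold U1
    positivity
  refine ⟨h1, h2, hU, fun h => ?_⟩
  have hle := h.1 0 ⟨le_rfl, hm1.le⟩
  -- A zero reward makes the utility at `(m1, m2)` zero as well.
  have h0 : U1 m m1 m2 a1 a2 m1 m2 = 0 := by simp [U1, h1]
  linarith
end
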